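/- arXiv:1412.2982 — 11 statements merged into one kernel-verified Lean document; each statement's English description precedes it below -/
import Mathlib

section
/- For every real ρ > 0, every real θ, and every natural number m, one has θ F_m(θ + 1) = (m+1) F_{m+1}(θ) − ρ F_m(θ). -/
open Finset

/-- F_n(θ) = Σ_{ℓ=0}^{n} [ρ^{n−ℓ}/((n−ℓ)! ℓ!)] (θ)_ℓ, with (θ)_ℓ the rising factorial. -/
noncomputable def erlF (ρ θ : ℝ) (n : ℕ) : ℝ :=
  ∑ ℓ ∈ Finset.range (n + 1),
    ρ ^ (n - ℓ) / ((n - ℓ).factorial * ℓ.factorial) * (ascPochhammer ℝ ℓ).eval θ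

/-- θ F_m(θ + 1) = (m+1) F_{m+1}(θ) − ρ F_m(θ). -/
theorem erlF_shift_identity (ρ : ℝ) (hρ : 0 < ρ) (θ : ℝ) (m : ℕ) :
    θ * erlF ρ (θ + 1) m = ((m : ℝ) + 1) * erlF ρ θ (m + 1) - ρ * erlF ρ θ m := by
  have key : ((m : ℝ) + 1) * erlF ρ θ (m + 1) = ρ * erlF ρ θ m + θ * erlF ρ (θ + 1) m := by
    have split : ((m : ℝ) + 1) * erlF ρ θ (m + 1) =
        ∑ l ∈ Finset.range (m + 1 + 1), ((m : ℝ) + 1 - l) *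
          (ρ ^ (m + 1 - l) / ((m + 1 - l).factorial * l.factorial) * (ascPochhammer ℝ l).eval θ)
        + ∑ l ∈ Finset.range (m + 1 + 1), (l : ℝ) *
          (ρ ^ (m + 1 - l) / ((m + 1 - l).factorial * l.factorial) *
            (ascPochhammer ℝ l).eval θ) := by
      unfold erlF
      rw [Finset.mul_sum, ← Finset.sum_add_distrib]
      refine Finset.sum_congr rfl fun l _ => ?_
      ring
    rw [split]
    congr 1
    · rw [Finset.sum_range_succ]
      unfold erlF
      rw [Finset.mul_sum]
      push_cast
      rw [sub_self, zero_mul, add_zero]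
      refine Finset.sum_congr rfl fun l hl => ?_
      obtain ⟨k, rfl⟩ := Nat.exists_eq_add_of_le (Nat.lt_succ_iff.mp (Finset.mem_range.mp hl))
      have h1 : l + k + 1 - l = k + 1 := by omega
      have h2 : l + k - l = k := by omega
      rw [h1, h2, Nat.factorial_succ, pow_succ]
      have := Nat.factorial_ne_zero k
      have := Nat.factorial_ne_zero l
      push_cast
      field_simp
      ring
    · rw [Finset.sum_range_succ']
      unfold erlF
      rw [Finset.mul_sum, Nat.cast_zero, zero_mul, add_zero]
      refine Finset.sum_congr rfl fun l hl => ?_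
      have h1 : m + 1 - (l + 1) = m - l := by omega
      rw [h1, Nat.factorial_succ, ascPochhammer_succ_left]
      have := Nat.factorial_ne_zero (m - l)
      have := Nat.factorial_ne_zero l
      simp only [Polynomial.eval_mul, Polynomial.eval_X, Polynomial.eval_comp,
        Polynomial.eval_add, Polynomial.eval_one]
      push_cast
      field_simp
  rw [key]
  ring
end

section
/- For every real ρ > 0 and all natural numbers n and k, the value of F_n at the negative integer −k is given by F_n(−k) = Σ_{j=0}^{min(k,n)} C(k,j) (−1)^j ρ^{n−j}/(n−j)!, where C(k,j) is the binomial coefficient. -/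
open Finset

/-- F_n(−k) = Σ_{j=0}^{min(k,n)} C(k,j) (−1)^j ρ^{n−j}/(n−j)!. -/
theorem erlF_at_neg_int (ρ : ℝ) (hρ : 0 < ρ) (n k : ℕ) :
    erlF ρ (-(k : ℝ)) n =
      ∑ j ∈ Finset.range (min k n + 1),
        (k.choose j : ℝ) * (-1) ^ j * ρ ^ (n - j) / (n - j).factorial := by
  unfold erlF
  have hsub : Finset.range (min k n + 1) ⊆ Finset.range (n + 1) := by
    intro x hx
    simp only [Finset.mem_range] at *
    omega
  rw [Finset.sum_subset hsub]
  · refine Finset.sum_congr rfl fun l _ => ?_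
    rw [ascPochhammer_eval_neg_eq_descPochhammer, descPochhammer_eval_eq_descFactorial,
      Nat.descFactorial_eq_factorial_mul_choose]
    have h1 : ((n - l).factorial : ℝ) ≠ 0 := by positivity
    have h2 : (l.factorial : ℝ) ≠ 0 := by positivity
    push_cast
    field_simp
  · intro x hx hx'
    simp only [Finset.mem_range] at *
    rw [Nat.choose_eq_zero_of_lt (by omega)]
    simp
end

section
/- For every real ρ > 0, every natural number m, and every real θ > −1, one has (ρ^m/m!) ∫_0^∞ e^{−ξ} ξ^θ (1 + ξ/ρ)^m dξ = Γ(θ+1) F_m(θ+1), where Γ is the real Gamma function; both sides equal Σ_{ℓ=0}^{m} ρ^{m−ℓ} Γ(θ+ℓ+1)/((m−ℓ)! ℓ!). -/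
open Finset MeasureTheory

theorem erl_gamma_asc (θ : ℝ) (hθ : -1 < θ) (l : ℕ) :
    Real.Gamma (θ + 1) * (ascPochhammer ℝ l).eval (θ + 1) = Real.Gamma (θ + l + 1) := by
  induction l with
  | zero => simp
  | succ k ih =>
    have hk : (0 : ℝ) ≤ k := Nat.cast_nonneg k
    have h : θ + ((k + 1 : ℕ) : ℝ) + 1 = (θ + k + 1) + 1 := by push_cast; ring
    rw [h, Real.Gamma_add_one (by linarith : (0 : ℝ) < θ + k + 1).ne', ← ih, ascPochhammer_succ_eval]
    ring

theorem erl_int (ρ : ℝ) (hρ : 0 < ρ) (m : ℕ) (θ : ℝ) (hθ : -1 < θ) :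
    ∫ ξ in Set.Ioi (0 : ℝ), Real.exp (-ξ) * ξ ^ θ * (1 + ξ / ρ) ^ m
      = ∑ l ∈ Finset.range (m + 1), (m.choose l : ℝ) / ρ ^ l * Real.Gamma (θ + l + 1) := by
  have h1 : ∀ ξ ∈ Set.Ioi (0 : ℝ), Real.exp (-ξ) * ξ ^ θ * (1 + ξ / ρ) ^ m
      = ∑ l ∈ Finset.range (m + 1), (m.choose l : ℝ) / ρ ^ l *
          (Real.exp (-ξ) * ξ ^ ((θ + l + 1) - 1)) := by
    intro ξ hξ
    rw [add_comm 1, add_pow, Finset.mul_sum]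
    refine Finset.sum_congr rfl fun l _ => ?_
    rw [add_sub_cancel_right, Real.rpow_add_natCast (ne_of_gt hξ), div_pow, one_pow]
    ring
  have hp : ∀ l : ℕ, 0 < θ + l + 1 := fun l => by
    have hk : (0 : ℝ) ≤ l := Nat.cast_nonneg l
    linarith
  rw [setIntegral_congr_fun measurableSet_Ioi h1, integral_finsetSum]
  · refine Finset.sum_congr rfl fun l _ => ?_
    rw [integral_const_mul, Real.Gamma_eq_integral (hp l)]
  · intro l _
    exact (Real.GammaIntegral_convergent (hp l)).const_mul _

/-- for ρ > 0, m ∈ ℕ, θ > −1,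
(ρ^m/m!) ∫_0^∞ e^{−ξ} ξ^θ (1 + ξ/ρ)^m dξ = Γ(θ+1) F_m(θ+1), and both sides equal
Σ_{ℓ=0}^{m} ρ^{m−ℓ} Γ(θ+ℓ+1)/((m−ℓ)! ℓ!). -/
theorem erlF_jagerman_integral (ρ : ℝ) (hρ : 0 < ρ) (m : ℕ) (θ : ℝ) (hθ : -1 < θ) :
    (ρ ^ m / m.factorial) *
        ∫ ξ in Set.Ioi (0 : ℝ), Real.exp (-ξ) * ξ ^ θ * (1 + ξ / ρ) ^ m
      = Real.Gamma (θ + 1) * erlF ρ (θ + 1) m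
    ∧ Real.Gamma (θ + 1) * erlF ρ (θ + 1) m
      = ∑ ℓ ∈ Finset.range (m + 1),
          ρ ^ (m - ℓ) * Real.Gamma (θ + ℓ + 1) / ((m - ℓ).factorial * ℓ.factorial) := by
  have h2 : Real.Gamma (θ + 1) * erlF ρ (θ + 1) m
      = ∑ ℓ ∈ Finset.range (m + 1),
          ρ ^ (m - ℓ) * Real.Gamma (θ + ℓ + 1) / ((m - ℓ).factorial * ℓ.factorial) := by
    rw [erlF, Finset.mul_sum]
    refine Finset.sum_congr rfl fun l _ => ?_
    rw [← erl_gamma_asc θ hθ l]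
    ring
  refine ⟨?_, h2⟩
  rw [h2, erl_int ρ hρ m θ hθ, Finset.mul_sum]
  refine Finset.sum_congr rfl fun l hl => ?_
  have hlm : l ≤ m := Nat.lt_succ_iff.mp (Finset.mem_range.mp hl)
  rw [Nat.cast_choose ℝ hlm]
  have hm : (m.factorial : ℝ) ≠ 0 := Nat.cast_ne_zero.mpr m.factorial_ne_zero
  have hl' : (l.factorial : ℝ) ≠ 0 := Nat.cast_ne_zero.mpr l.factorial_ne_zero
  have hd : ((m - l).factorial : ℝ) ≠ 0 := Nat.cast_ne_zero.mpr (m - l).factorial_ne_zero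
  have hr : ρ ^ m = ρ ^ (m - l) * ρ ^ l := by rw [← pow_add, Nat.sub_add_cancel hlm]
  have hrl : ρ ^ l ≠ 0 := pow_ne_zero _ hρ.ne'
  rw [hr]
  field_simp
end

section
/- Fix a real ρ > 0 and a natural number n₀, and for t ≥ 0 and n ∈ ℕ define p_n(t) = e^{−ρσ(t)} Σ_{j=0}^{min(n,n₀)} C(n₀,j) e^{−jt} ρ^{n−j} σ(t)^{n+n₀−2j}/(n−j)!, where σ(t) = 1 − e^{−t}, and set p_{−1}(t) = 0. Then p_n(0) = 1 if n = n₀ and p_n(0) = 0 otherwise, and for every n ∈ ℕ and every t > 0 the function p_n is differentiable at t with p_n′(t) = ρ[p_{n−1}(t) − p_n(t)] + (n+1) p_{n+1}(t) − n p_n(t). -/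
open Finset

/-- σ(t) = 1 − e^{−t}. -/
noncomputable def sigmaMMinf (t : ℝ) : ℝ := 1 - Real.exp (-t)

/-- The transient M/M/∞ queue-length probabilities started from n₀:
p_n(t) = e^{−ρσ(t)} Σ_{j=0}^{min(n,n₀)} C(n₀,j) e^{−jt} ρ^{n−j} σ(t)^{n+n₀−2j}/(n−j)!. -/
noncomputable def pMMinf (ρ : ℝ) (n₀ n : ℕ) (t : ℝ) : ℝ :=
  Real.exp (-ρ * sigmaMMinf t) *
    ∑ j ∈ Finset.range (min n n₀ + 1),
      (n₀.choose j : ℝ) * Real.exp (-(j : ℝ) * t) * ρ ^ (n - j) *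
        sigmaMMinf t ^ (n + n₀ - 2 * j) / (n - j).factorial

/-- p extended to integer indices, with p_{-1}(t) = 0. -/
noncomputable def pMMinfZ (ρ : ℝ) (n₀ : ℕ) (n : ℤ) (t : ℝ) : ℝ :=
  if n < 0 then 0 else pMMinf ρ n₀ n.toNat t

noncomputable def bMM (n₀ j : ℕ) (t : ℝ) : ℝ :=
  (n₀.choose j : ℝ) * Real.exp (-t) ^ j * sigmaMMinf t ^ (n₀ - j)

noncomputable def qMM (ρ : ℝ) (k : ℕ) (t : ℝ) : ℝ :=
  Real.exp (-ρ * sigmaMMinf t) * (ρ * sigmaMMinf t) ^ k / k.factorial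

noncomputable def qMMpred (ρ : ℝ) : ℕ → ℝ → ℝ
  | 0, _ => 0
  | k + 1, t => qMM ρ k t

theorem pMM_eq (ρ : ℝ) (n₀ n : ℕ) (t : ℝ) :
    pMMinf ρ n₀ n t = ∑ x ∈ antidiagonal n, bMM n₀ x.1 t * qMM ρ x.2 t := by
  rw [Finset.Nat.sum_antidiagonal_eq_sum_range_succ_mk, pMMinf, Finset.mul_sum]
  have hsub : Finset.range (min n n₀ + 1) ⊆ Finset.range n.succ := by
    intro j hj
    simp only [Finset.mem_range] at *
    omega
  rw [← Finset.sum_subset hsub]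
  · refine Finset.sum_congr rfl fun j hj => ?_
    simp only [Finset.mem_range] at hj
    have h1 : n + n₀ - 2 * j = (n - j) + (n₀ - j) := by omega
    have h2 : Real.exp (-(j : ℝ) * t) = Real.exp (-t) ^ j := by
      rw [← Real.exp_nat_mul]; ring_nf
    rw [h1, h2, bMM, qMM, pow_add, mul_pow]
    ring
  · intro j hj hj'
    simp only [Finset.mem_range] at hj hj'
    have : n₀ < j := by omega
    simp [bMM, Nat.choose_eq_zero_of_lt this]

theorem sigma_deriv (t : ℝ) : HasDerivAt sigmaMMinf (Real.exp (-t)) t := by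
  have h := ((hasDerivAt_id t).neg.exp).const_sub 1
  exact h.congr_deriv (by simp)

theorem b_deriv (n₀ j : ℕ) (t : ℝ) :
    HasDerivAt (bMM n₀ j) (((j : ℝ) + 1) * bMM n₀ (j + 1) t - j * bMM n₀ j t) t := by
  have he : HasDerivAt (fun s : ℝ => Real.exp (-s)) (-Real.exp (-t)) t := by
    simpa using (hasDerivAt_id t).neg.exp
  have h := ((he.pow j).const_mul (n₀.choose j : ℝ)).mul ((sigma_deriv t).pow (n₀ - j))
  refine HasDerivAt.congr_deriv h ?_
  have hc : (n₀.choose (j + 1) : ℝ) * ((j : ℝ) + 1) = n₀.choose j * ((n₀ - j : ℕ) : ℝ) := by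
    exact_mod_cast Nat.choose_succ_right_eq n₀ j
  have hj : (j : ℝ) * Real.exp (-t) ^ (j - 1) * Real.exp (-t) = j * Real.exp (-t) ^ j := by
    cases j with
    | zero => simp
    | succ k => simp [pow_succ]; ring
  have h3 : n₀ - (j + 1) = n₀ - j - 1 := by omega
  simp only [bMM, h3, Pi.pow_apply, pow_succ]
  linear_combination (-(n₀.choose j : ℝ) * sigmaMMinf t ^ (n₀ - j)) * hj
    - Real.exp (-t) ^ j * Real.exp (-t) * sigmaMMinf t ^ (n₀ - j - 1) * hc

theorem q_succ (ρ : ℝ) (k : ℕ) (t : ℝ) :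
    ((k : ℝ) + 1) * qMM ρ (k + 1) t = ρ * sigmaMMinf t * qMM ρ k t := by
  have : (k.factorial : ℝ) ≠ 0 := by positivity
  have : (k : ℝ) + 1 ≠ 0 := by positivity
  simp only [qMM, Nat.factorial_succ, Nat.cast_mul, Nat.cast_succ]
  field_simp
  ring

theorem q_deriv (ρ : ℝ) (k : ℕ) (t : ℝ) :
    HasDerivAt (qMM ρ k) (ρ * (qMMpred ρ k t - qMM ρ k t)
      + ((k : ℝ) + 1) * qMM ρ (k + 1) t - k * qMM ρ k t) t := by
  have h := ((((sigma_deriv t).const_mul (-ρ)).exp).mul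
    (((sigma_deriv t).const_mul ρ).pow k)).div_const (k.factorial : ℝ)
  refine HasDerivAt.congr_deriv h ?_
  have hE : Real.exp (-t) = 1 - sigmaMMinf t := by simp [sigmaMMinf]
  rw [q_succ, hE]
  cases k with
  | zero => simp [qMMpred, qMM]; ring
  | succ k =>
    have h2 := q_succ ρ k t
    push_cast
    rw [h2]
    have : (k.factorial : ℝ) ≠ 0 := by positivity
    have : (k : ℝ) + 1 ≠ 0 := by positivity
    simp only [qMMpred, qMM, Nat.factorial_succ, Nat.cast_mul, Nat.cast_succ, Pi.pow_apply,
      Nat.add_sub_cancel]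
    field_simp
    ring

theorem pZ_eq (ρ : ℝ) (n₀ n : ℕ) (t : ℝ) :
    pMMinfZ ρ n₀ ((n : ℤ) - 1) t = ∑ x ∈ antidiagonal n, bMM n₀ x.1 t * qMMpred ρ x.2 t := by
  cases n with
  | zero => simp [pMMinfZ, qMMpred]
  | succ m =>
    rw [Finset.Nat.sum_antidiagonal_succ']
    simp [pMMinfZ, qMMpred, pMM_eq]

theorem p_succ (ρ : ℝ) (n₀ n : ℕ) (t : ℝ) :
    ((n : ℝ) + 1) * pMMinf ρ n₀ (n + 1) t =
      ∑ x ∈ antidiagonal n, ((x.1 : ℝ) + 1) * bMM n₀ (x.1 + 1) t * qMM ρ x.2 t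
      + ∑ x ∈ antidiagonal n, bMM n₀ x.1 t * (((x.2 : ℝ) + 1) * qMM ρ (x.2 + 1) t) := by
  have h1 := Finset.Nat.sum_antidiagonal_succ (n := n)
    (f := fun x : ℕ × ℕ => (x.1 : ℝ) * bMM n₀ x.1 t * qMM ρ x.2 t)
  have h2 := Finset.Nat.sum_antidiagonal_succ' (n := n)
    (f := fun x : ℕ × ℕ => bMM n₀ x.1 t * ((x.2 : ℝ) * qMM ρ x.2 t))
  simp only [Nat.cast_zero, zero_mul, mul_zero, zero_add, add_zero, Nat.cast_add,
    Nat.cast_one] at h1 h2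
  rw [← h1, ← h2, pMM_eq, Finset.mul_sum, ← Finset.sum_add_distrib]
  refine Finset.sum_congr rfl fun x hx => ?_
  have : (x.1 : ℝ) + x.2 = n + 1 := by exact_mod_cast Finset.HasAntidiagonal.mem_antidiagonal.1 hx
  rw [← this]
  ring

theorem b_zero (n₀ j : ℕ) : bMM n₀ j 0 = if j = n₀ then 1 else 0 := by
  rcases lt_trichotomy j n₀ with h | h | h
  · have : n₀ - j ≠ 0 := by omega
    simp [bMM, sigmaMMinf, this, h.ne]
  · simp [bMM, h]
  · simp [bMM, Nat.choose_eq_zero_of_lt h, h.ne']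

theorem q_zero (ρ : ℝ) (k : ℕ) : qMM ρ k 0 = if k = 0 then 1 else 0 := by
  cases k <;> simp [qMM, sigmaMMinf]

/-- p_n(0) = δ(n,n₀), and for every n ∈ ℕ and t > 0, p_n is
differentiable at t with p_n′(t) = ρ[p_{n−1}(t) − p_n(t)] + (n+1) p_{n+1}(t) − n p_n(t)
(with the convention p_{−1} = 0). -/
theorem pMMinf_solves_forward_equations (ρ : ℝ) (hρ : 0 < ρ) (n₀ : ℕ) :
    (∀ n : ℕ, pMMinf ρ n₀ n 0 = if n = n₀ then 1 else 0)
    ∧ ∀ n : ℕ, ∀ t : ℝ, 0 < t →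
        HasDerivAt (fun s => pMMinf ρ n₀ n s)
          (ρ * (pMMinfZ ρ n₀ ((n : ℤ) - 1) t - pMMinf ρ n₀ n t)
            + ((n : ℝ) + 1) * pMMinf ρ n₀ (n + 1) t - (n : ℝ) * pMMinf ρ n₀ n t) t := by
  refine ⟨fun n => ?_, fun n t _ => ?_⟩
  · rw [pMM_eq, Finset.sum_eq_single (n, 0)]
    · simp [b_zero, q_zero]
    · rintro ⟨a, b⟩ hx hne
      have hb : b ≠ 0 := by
        rintro rfl
        simp at hx
        exact hne (by rw [hx])
      simp [q_zero, hb]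
    · simp
  · have h : HasDerivAt (fun s => ∑ x ∈ antidiagonal n, bMM n₀ x.1 s * qMM ρ x.2 s) _ t :=
      HasDerivAt.fun_sum fun x _ => (b_deriv n₀ x.1 t).mul (q_deriv ρ x.2 t)
    simp only [← pMM_eq] at h
    refine h.congr_deriv ?_
    rw [p_succ, pZ_eq, pMM_eq, ← Finset.sum_sub_distrib, Finset.mul_sum, Finset.mul_sum,
      ← Finset.sum_add_distrib, ← Finset.sum_add_distrib, ← Finset.sum_sub_distrib]
    refine Finset.sum_congr rfl fun x hx => ?_
    have : (x.1 : ℝ) + x.2 = n := by exact_mod_cast Finset.HasAntidiagonal.mem_antidiagonal.1 hx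
    rw [← this]
    ring
end

section
/- Fix a real ρ > 0 and a natural number n₀. For every natural number n and every real t ≥ 0, the series (n₀! e^{−ρ}/ρ^{n₀}) Σ_{k=0}^{∞} (ρ^k/k!) e^{−kt} F_{n₀}(−k) F_n(−k) converges and equals e^{−ρσ(t)} Σ_{j=0}^{min(n,n₀)} C(n₀,j) e^{−jt} ρ^{n−j} σ(t)^{n+n₀−2j}/(n−j)!, where σ(t) = 1 − e^{−t} and F_n(−k) = Σ_{j=0}^{min(k,n)} C(k,j) (−1)^j ρ^{n−j}/(n−j)!. -/
open Finset

/-- F_n(−k) = Σ_{j=0}^{min(k,n)} C(k,j) (−1)^j ρ^{n−j}/(n−j)!, the value at −k of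
F_n(θ) = Σ_{ℓ=0}^{n} [ρ^{n−ℓ}/((n−ℓ)! ℓ!)] (θ)_ℓ. -/
noncomputable def erlFneg (ρ : ℝ) (n k : ℕ) : ℝ :=
  ∑ j ∈ Finset.range (min k n + 1),
    (k.choose j : ℝ) * (-1) ^ j * ρ ^ (n - j) / (n - j).factorial

noncomputable def auxE (a : ℝ) (n : ℕ) : ℝ := a ^ n / n.factorial

lemma auxE_zero (a : ℝ) : auxE a 0 = 1 := by simp [auxE]

lemma auxE_succ (a : ℝ) (n : ℕ) : ((n : ℝ) + 1) * auxE a (n + 1) = a * auxE a n := by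
  unfold auxE
  rw [Nat.factorial_succ]
  push_cast
  have : (n.factorial : ℝ) ≠ 0 := by positivity
  have : (n : ℝ) + 1 ≠ 0 := by positivity
  field_simp
  ring

noncomputable def auxG (ρ : ℝ) (n k : ℕ) : ℝ :=
  ∑ j ∈ Finset.range (n + 1), (k.choose j : ℝ) * (-1) ^ j * auxE ρ (n - j)

lemma erlFneg_eq (ρ : ℝ) (n k : ℕ) : erlFneg ρ n k = auxG ρ n k := by
  unfold erlFneg auxG auxE
  simp only [mul_div_assoc]
  apply Finset.sum_subset
  · intro j hj
    simp only [Finset.mem_range] at *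
    omega
  · intro j hj hj'
    simp only [Finset.mem_range] at *
    rw [Nat.choose_eq_zero_of_lt (by omega)]
    simp

lemma auxG_zero_left (ρ : ℝ) (k : ℕ) : auxG ρ 0 k = 1 := by simp [auxG, auxE]

lemma auxG_zero_right (ρ : ℝ) (n : ℕ) : auxG ρ n 0 = auxE ρ n := by
  unfold auxG
  rw [Finset.sum_range_succ']
  simp

lemma auxG_A (ρ : ℝ) (n k : ℕ) :
    auxG ρ (n + 1) (k + 1) = auxG ρ (n + 1) k - auxG ρ n k := by
  unfold auxG
  rw [Finset.sum_range_succ' _ (n + 1), Finset.sum_range_succ' _ (n + 1)]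
  simp only [Nat.choose_succ_succ, Nat.add_sub_add_right, Nat.choose_zero_right]
  rw [add_sub_right_comm, ← Finset.sum_sub_distrib]
  congr 1
  apply Finset.sum_congr rfl
  intro j _
  push_cast
  ring

lemma auxG_B (ρ : ℝ) (k : ℕ) : ∀ n : ℕ,
    ((n : ℝ) + 1) * auxG ρ (n + 1) (k + 1) = ρ * auxG ρ n (k + 1) - (k + 1) * auxG ρ n k := by
  induction k with
  | zero =>
    intro n
    cases n with
    | zero =>
      rw [auxG_A]
      simp only [auxG_zero_left, auxG_zero_right]
      have := auxE_succ ρ 0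
      rw [auxE_zero] at this
      push_cast at *
      linarith
    | succ n =>
      rw [auxG_A, auxG_A]
      simp only [auxG_zero_right]
      have h1 := auxE_succ ρ n
      have h2 := auxE_succ ρ (n + 1)
      push_cast at *
      linarith
  | succ k ih =>
    intro n
    cases n with
    | zero =>
      have h := ih 0
      rw [auxG_A]
      simp only [auxG_zero_left] at *
      push_cast at *
      linarith
    | succ n =>
      have h1 := ih n
      have h2 := ih (n + 1)
      have h3 := auxG_A ρ n k
      rw [auxG_A ρ (n + 1) (k + 1), auxG_A ρ n (k + 1)]
      push_cast at *
      linear_combination h2 - h1 + ((k : ℝ) + 1) * h3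

noncomputable def auxD (a : ℝ) (m j : ℕ) : ℝ := if j ≤ m then auxE a (m - j) else 0

noncomputable def auxT (a y : ℝ) (m n : ℕ) : ℝ :=
  ∑ j ∈ Finset.range (n + 1), auxE y j * auxD a m j * auxE a (n - j)

lemma auxT_step (a y : ℝ) (m n : ℕ) :
    ((n : ℝ) + 1) * auxT a y m (n + 1) = a * auxT a y m n +
      y * ∑ j ∈ Finset.range (n + 1), auxE y j * auxD a m (j + 1) * auxE a (n - j) := by
  unfold auxT
  have h : ((n : ℝ) + 1) * ∑ j ∈ Finset.range (n + 1 + 1),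
        auxE y j * auxD a m j * auxE a (n + 1 - j)
      = (∑ j ∈ Finset.range (n + 1 + 1),
          (((n : ℝ) + 1) - j) * (auxE y j * auxD a m j * auxE a (n + 1 - j)))
        + ∑ j ∈ Finset.range (n + 1 + 1),
          (j : ℝ) * (auxE y j * auxD a m j * auxE a (n + 1 - j)) := by
    rw [← Finset.sum_add_distrib, Finset.mul_sum]
    apply Finset.sum_congr rfl
    intro j _
    ring
  rw [h]
  congr 1
  · rw [Finset.sum_range_succ, Finset.mul_sum]
    push_cast
    rw [sub_self, zero_mul, add_zero]
    apply Finset.sum_congr rfl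
    intro j hj
    rw [Finset.mem_range] at hj
    obtain ⟨d, rfl⟩ : ∃ d, n = j + d := ⟨n - j, by omega⟩
    have e1 : j + d + 1 - j = d + 1 := by omega
    have e2 : j + d - j = d := by omega
    rw [e1, e2]
    have := auxE_succ a d
    push_cast
    linear_combination (auxE y j * auxD a m j) * this
  · rw [Finset.sum_range_succ', Finset.mul_sum]
    simp only [Nat.cast_zero, zero_mul, add_zero, Nat.add_sub_add_right]
    apply Finset.sum_congr rfl
    intro j _
    have := auxE_succ y j
    push_cast
    linear_combination (auxD a m (j + 1) * auxE a (n - j)) * this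

lemma auxT_step_zero (a y : ℝ) (n : ℕ) :
    ((n : ℝ) + 1) * auxT a y 0 (n + 1) = a * auxT a y 0 n := by
  rw [auxT_step]
  simp [auxD]

lemma auxT_step_succ (a y : ℝ) (m n : ℕ) :
    ((n : ℝ) + 1) * auxT a y (m + 1) (n + 1) = a * auxT a y (m + 1) n + y * auxT a y m n := by
  rw [auxT_step]
  simp [auxD, auxT]

lemma auxT_zero (a y : ℝ) (m : ℕ) : auxT a y m 0 = auxE a m := by
  simp [auxT, auxD, auxE]

noncomputable def auxf (ρ y : ℝ) (m n k : ℕ) : ℝ := auxE y k * auxG ρ m k * auxG ρ n k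

lemma hs_congr {f g : ℕ → ℝ} {s u : ℝ} (h : HasSum f s) (hfg : ∀ k, g k = f k) (hsu : u = s) :
    HasSum g u := by
  have : g = f := funext hfg
  rw [this, hsu]
  exact h

lemma hs_shift {f : ℕ → ℝ} {s : ℝ} (h0 : f 0 = 0) (h : HasSum (fun k => f (k + 1)) s) :
    HasSum f s := by
  have := (hasSum_nat_add_iff (f := f) 1).1 h
  simpa [h0] using this

lemma hasSum_step (ρ y : ℝ) (m n : ℕ) (s u : ℝ) (hs : HasSum (auxf ρ y m n) s)
    (hu : HasSum (fun k => auxE y k * auxG ρ m (k + 1) * auxG ρ n k) u) :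
    HasSum (auxf ρ y m (n + 1)) ((ρ * s - y * u) / ((n : ℝ) + 1)) := by
  have hn : (n : ℝ) + 1 ≠ 0 := by positivity
  have h1 : HasSum (fun k => ρ * auxf ρ y m n k - ((n : ℝ) + 1) * auxf ρ y m (n + 1) k)
      (y * u) := by
    have h2 : HasSum (fun k => ρ * auxf ρ y m n (k + 1)
        - ((n : ℝ) + 1) * auxf ρ y m (n + 1) (k + 1)) (y * u) := by
      refine hs_congr (hu.mul_left y) (fun k => ?_) rfl
      unfold auxf
      have hB := auxG_B ρ k n
      have hE := auxE_succ y k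
      linear_combination (-(auxE y (k + 1) * auxG ρ m (k + 1))) * hB
        + (auxG ρ m (k + 1) * auxG ρ n k) * hE
    refine hs_shift ?_ h2
    have := auxE_succ ρ n
    simp only [auxf, auxG_zero_right]
    linear_combination (-(auxE y 0 * auxE ρ m)) * this
  have h4 := ((hs.mul_left ρ).sub h1).div_const ((n : ℝ) + 1)
  refine hs_congr h4 (fun k => ?_) rfl
  rw [eq_div_iff hn]
  ring

lemma auxf_comm (ρ y : ℝ) (m n : ℕ) : auxf ρ y m n = auxf ρ y n m := by
  funext k
  unfold auxf
  ring

lemma hasSum_base0 (ρ y : ℝ) : HasSum (auxf ρ y 0 0) (Real.exp y) := by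
  have h := NormedSpace.expSeries_div_hasSum_exp y
  rw [← Real.exp_eq_exp_ℝ] at h
  refine hs_congr h (fun k => ?_) rfl
  simp [auxf, auxG_zero_left, auxE]

lemma hasSum_base (ρ y : ℝ) (m : ℕ) :
    HasSum (auxf ρ y m 0) (Real.exp y * auxE (ρ - y) m) := by
  rw [auxf_comm]
  induction m with
  | zero => simpa [auxE_zero] using hasSum_base0 ρ y
  | succ m ih =>
    have hu : HasSum (fun k => auxE y k * auxG ρ 0 (k + 1) * auxG ρ m k)
        (Real.exp y * auxE (ρ - y) m) := by
      convert ih using 1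
      funext k
      simp [auxf, auxG_zero_left]
    convert hasSum_step ρ y 0 m _ _ ih hu using 1
    have := auxE_succ (ρ - y) m
    have hn : (m : ℝ) + 1 ≠ 0 := by positivity
    rw [eq_div_iff hn]
    linear_combination Real.exp y * this

lemma hasSum_main (ρ y : ℝ) (n : ℕ) : ∀ m : ℕ,
    HasSum (auxf ρ y m n) (Real.exp y * auxT (ρ - y) y m n) := by
  induction n with
  | zero =>
    intro m
    rw [auxT_zero]
    exact hasSum_base ρ y m
  | succ n ih =>
    intro m
    have hn : (n : ℝ) + 1 ≠ 0 := by positivity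
    cases m with
    | zero =>
      have hu : HasSum (fun k => auxE y k * auxG ρ 0 (k + 1) * auxG ρ n k)
          (Real.exp y * auxT (ρ - y) y 0 n) := by
        convert ih 0 using 1
        funext k
        simp [auxf, auxG_zero_left]
      convert hasSum_step ρ y 0 n _ _ (ih 0) hu using 1
      rw [eq_div_iff hn]
      linear_combination Real.exp y * auxT_step_zero (ρ - y) y n
    | succ m =>
      have hu : HasSum (fun k => auxE y k * auxG ρ (m + 1) (k + 1) * auxG ρ n k)
          (Real.exp y * auxT (ρ - y) y (m + 1) n - Real.exp y * auxT (ρ - y) y m n) := by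
        refine hs_congr ((ih (m + 1)).sub (ih m)) (fun k => ?_) rfl
        rw [auxG_A]
        unfold auxf
        ring
      convert hasSum_step ρ y (m + 1) n _ _ (ih (m + 1)) hu using 1
      rw [eq_div_iff hn]
      linear_combination Real.exp y * auxT_step_succ (ρ - y) y m n

lemma closed_form (ρ : ℝ) (hρ : 0 < ρ) (n₀ n : ℕ) (t : ℝ) :
    (n₀.factorial : ℝ) * Real.exp (-ρ) / ρ ^ n₀ *
      (Real.exp (ρ * Real.exp (-t)) *
        auxT (ρ - ρ * Real.exp (-t)) (ρ * Real.exp (-t)) n₀ n) = pMMinf ρ n₀ n t := by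
  unfold pMMinf
  have hσ : ρ - ρ * Real.exp (-t) = ρ * sigmaMMinf t := by unfold sigmaMMinf; ring
  have he : Real.exp (-ρ * sigmaMMinf t) = Real.exp (-ρ) * Real.exp (ρ * Real.exp (-t)) := by
    rw [← Real.exp_add]
    congr 1
    unfold sigmaMMinf
    ring
  rw [hσ, he]
  generalize sigmaMMinf t = σ
  have key : (n₀.factorial : ℝ) / ρ ^ n₀ * auxT (ρ * σ) (ρ * Real.exp (-t)) n₀ n =
      ∑ j ∈ Finset.range (min n n₀ + 1),
      (n₀.choose j : ℝ) * Real.exp (-(j : ℝ) * t) * ρ ^ (n - j) *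
        σ ^ (n + n₀ - 2 * j) / (n - j).factorial := by
    unfold auxT
    rw [Finset.mul_sum]
    symm
    refine Eq.trans ?_ (Finset.sum_subset (s₁ := Finset.range (min n n₀ + 1)) ?_ ?_)
    · apply Finset.sum_congr rfl
      intro j hj
      rw [Finset.mem_range] at hj
      obtain ⟨d, rfl⟩ : ∃ d, n = j + d := ⟨n - j, by omega⟩
      obtain ⟨c, rfl⟩ : ∃ c, n₀ = j + c := ⟨n₀ - j, by omega⟩
      have e1 : j + d + (j + c) - 2 * j = d + c := by omega
      have e2 : j + d - j = d := by omega
      have e3 : j + c - j = c := by omega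
      have hx : Real.exp (-(j : ℝ) * t) = Real.exp (-t) ^ j := by
        rw [← Real.exp_nat_mul]
        congr 1
        ring
      have hch : ((j + c).choose j : ℝ) = (j + c).factorial / (j.factorial * c.factorial) := by
        rw [Nat.cast_add_choose]
      rw [e1, e2, auxD, if_pos (by omega), e3, hx, hch]
      unfold auxE
      have h1 : (j.factorial : ℝ) ≠ 0 := by positivity
      have h2 : (c.factorial : ℝ) ≠ 0 := by positivity
      have h3 : (d.factorial : ℝ) ≠ 0 := by positivity
      have h4 : ρ ≠ 0 := hρ.ne'
      field_simp
      ring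
    · intro j hj
      simp only [Finset.mem_range] at *
      omega
    · intro j hj hj'
      simp only [Finset.mem_range] at *
      rw [auxD, if_neg (by omega)]
      simp
  rw [← key]
  ring

/-- the spectral series
(n₀! e^{−ρ}/ρ^{n₀}) Σ_{k=0}^{∞} (ρ^k/k!) e^{−kt} F_{n₀}(−k) F_n(−k)
converges and equals the closed form p_n(t). -/
theorem spectral_representation_MMinf (ρ : ℝ) (hρ : 0 < ρ) (n₀ n : ℕ)
    (t : ℝ) (ht : 0 ≤ t) :
    Summable (fun k : ℕ =>
      ρ ^ k / k.factorial * Real.exp (-(k : ℝ) * t) * erlFneg ρ n₀ k * erlFneg ρ n k)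
    ∧ (n₀.factorial : ℝ) * Real.exp (-ρ) / ρ ^ n₀ *
        ∑' k : ℕ,
          ρ ^ k / k.factorial * Real.exp (-(k : ℝ) * t) * erlFneg ρ n₀ k * erlFneg ρ n k
      = pMMinf ρ n₀ n t := by
  have h := hasSum_main ρ (ρ * Real.exp (-t)) n n₀
  have hf : (fun k : ℕ =>
      ρ ^ k / k.factorial * Real.exp (-(k : ℝ) * t) * erlFneg ρ n₀ k * erlFneg ρ n k)
      = auxf ρ (ρ * Real.exp (-t)) n₀ n := by
    funext k
    have hx : Real.exp (-(k : ℝ) * t) = Real.exp (-t) ^ k := by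
      rw [← Real.exp_nat_mul]
      congr 1
      ring
    rw [hx, erlFneg_eq, erlFneg_eq]
    unfold auxf
    rw [auxE, mul_pow]
    ring
  rw [hf]
  refine ⟨h.summable, ?_⟩
  rw [h.tsum_eq]
  exact closed_form ρ hρ n₀ n t
end

section
/- Fix a real ρ > 0 and a natural number n₀. For every real t ≥ 0 and every real u, the series Σ_{n=0}^{∞} p_n(t) u^n converges and equals exp[ρ(1 − e^{−t})(u − 1)] · [1 + (u − 1)e^{−t}]^{n₀}, where p_n(t) = e^{−ρσ(t)} Σ_{j=0}^{min(n,n₀)} C(n₀,j) e^{−jt} ρ^{n−j} σ(t)^{n+n₀−2j}/(n−j)! and σ(t) = 1 − e^{−t}. -/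
open Finset

/-- for every t ≥ 0 and every real u, the series
Σ_{n=0}^{∞} p_n(t) u^n converges and equals
exp[ρ(1 − e^{−t})(u − 1)] · [1 + (u − 1)e^{−t}]^{n₀}. -/
theorem pMMinf_generating_function (ρ : ℝ) (hρ : 0 < ρ) (n₀ : ℕ)
    (t : ℝ) (ht : 0 ≤ t) (u : ℝ) :
    Summable (fun n : ℕ => pMMinf ρ n₀ n t * u ^ n)
    ∧ ∑' n : ℕ, pMMinf ρ n₀ n t * u ^ n
      = Real.exp (ρ * (1 - Real.exp (-t)) * (u - 1)) *
          (1 + (u - 1) * Real.exp (-t)) ^ n₀ := by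
  have key : ∀ j ∈ Finset.range (n₀ + 1), HasSum (fun n : ℕ => if j ≤ n then
      ((u * Real.exp (-t)) ^ j * sigmaMMinf t ^ (n₀ - j) * (n₀.choose j : ℝ)) *
        ((ρ * sigmaMMinf t * u) ^ (n - j) / (n - j).factorial) else 0)
      (((u * Real.exp (-t)) ^ j * sigmaMMinf t ^ (n₀ - j) * (n₀.choose j : ℝ)) *
        Real.exp (ρ * sigmaMMinf t * u)) := by
    intro j _
    have h0 : HasSum (fun n : ℕ => (ρ * sigmaMMinf t * u) ^ n / (n.factorial : ℝ))
        (Real.exp (ρ * sigmaMMinf t * u)) := by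
      rw [Real.exp_eq_exp_ℝ]
      exact NormedSpace.expSeries_div_hasSum_exp _
    have h1 := h0.mul_left
      ((u * Real.exp (-t)) ^ j * sigmaMMinf t ^ (n₀ - j) * (n₀.choose j : ℝ))
    rw [← (add_left_injective j).hasSum_iff]
    · convert h1 using 1
      · rfl
      funext n
      simp
    · intro n hn
      rw [if_neg]
      intro hjn
      exact hn ⟨n - j, Nat.sub_add_cancel hjn⟩
  have h2 := (hasSum_sum key).mul_left (Real.exp (-ρ * sigmaMMinf t))
  have h3 : HasSum (fun n : ℕ => pMMinf ρ n₀ n t * u ^ n)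
      (Real.exp (ρ * (1 - Real.exp (-t)) * (u - 1)) *
          (1 + (u - 1) * Real.exp (-t)) ^ n₀) := by
    convert h2 using 1
    · rfl
    · funext n
      rw [pMMinf, mul_assoc]
      congr 1
      rw [← Finset.sum_filter, Finset.sum_mul]
      have hs : Finset.filter (fun j => j ≤ n) (Finset.range (n₀ + 1))
          = Finset.range (min n n₀ + 1) := by
        ext j
        simp only [Finset.mem_filter, Finset.mem_range]
        omega
      rw [hs]
      refine Finset.sum_congr rfl fun j hj => ?_
      rw [Finset.mem_range] at hj
      obtain ⟨a, rfl⟩ : ∃ a, n = j + a := ⟨n - j, by omega⟩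
      obtain ⟨b, rfl⟩ : ∃ b, n₀ = j + b := ⟨n₀ - j, by omega⟩
      have e1 : j + a + (j + b) - 2 * j = a + b := by omega
      have e2 : Real.exp (-(j : ℝ) * t) = Real.exp (-t) ^ j := by
        rw [← Real.exp_nat_mul]
        congr 1
        ring
      rw [e1, e2, Nat.add_sub_cancel_left, Nat.add_sub_cancel_left]
      ring
    · rw [← Finset.sum_mul, ← add_pow, mul_comm (_ ^ n₀), ← mul_assoc, ← Real.exp_add]
      unfold sigmaMMinf
      congr 2 <;> ring
  exact ⟨h3.summable, h3.tsum_eq⟩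
end

section
/- Fix reals ρ > 0 and θ > 0 and natural numbers m ≥ 1 and 0 ≤ n₀ ≤ m. Suppose P̂_0, …, P̂_m are real numbers satisfying: P̂_1 − (ρ+θ) P̂_0 = −δ(0,n₀); (n+1) P̂_{n+1} + ρ P̂_{n−1} − (ρ+θ+n) P̂_n = −δ(n,n₀) for 1 ≤ n ≤ m−1; and ρ P̂_{m−1} − (θ+m) P̂_m = −δ(m,n₀), where δ(n,n₀) = 1 if n = n₀ and 0 otherwise. Then P̂_m = (n₀!/m!) ρ^{m−n₀} F_{n₀}(θ) / [(m+1) F_{m+1}(θ) − ρ F_m(θ)]. -/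
open Finset

lemma erlF_ps (ρ θ : ℝ) (n : ℕ) : erlF ρ θ n = PowerSeries.coeff n
    ((PowerSeries.mk fun j => (ascPochhammer ℝ j).eval θ / (j.factorial : ℝ)) *
      (PowerSeries.mk fun i => ρ ^ i / (i.factorial : ℝ))) := by
  rw [PowerSeries.coeff_mul, Finset.Nat.sum_antidiagonal_eq_sum_range_succ_mk]
  unfold erlF
  refine Finset.sum_congr rfl fun l _ => ?_
  simp only [PowerSeries.coeff_mk]
  have := Nat.factorial_ne_zero l
  have := Nat.factorial_ne_zero (n - l)
  field_simp

lemma erlF_rec (ρ θ : ℝ) (n : ℕ) :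
    ((n : ℝ) + 2) * erlF ρ θ (n + 2)
      = (ρ + θ + (n + 1)) * erlF ρ θ (n + 1) - ρ * erlF ρ θ n := by
  simp only [erlF_ps]
  set B : PowerSeries ℝ := PowerSeries.mk fun j => (ascPochhammer ℝ j).eval θ / (j.factorial : ℝ)
    with hB
  set A : PowerSeries ℝ := PowerSeries.mk fun i => ρ ^ i / (i.factorial : ℝ) with hA
  have dA : PowerSeries.derivative ℝ A = PowerSeries.C ρ * A := by
    ext k
    rw [PowerSeries.coeff_derivative, PowerSeries.coeff_C_mul, hA]
    simp only [PowerSeries.coeff_mk, Nat.factorial_succ]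
    have := Nat.factorial_ne_zero k
    push_cast
    field_simp
    ring
  have dB : PowerSeries.derivative ℝ B
      = PowerSeries.C θ * B + PowerSeries.X * PowerSeries.derivative ℝ B := by
    have hs : ∀ k, PowerSeries.coeff (k + 1) B * ((k : ℝ) + 1)
        = (θ + k) * PowerSeries.coeff k B := by
      intro k
      rw [hB]
      simp only [PowerSeries.coeff_mk, Nat.factorial_succ, ascPochhammer_succ_eval]
      have := Nat.factorial_ne_zero k
      push_cast
      field_simp
    ext k
    rw [map_add, PowerSeries.coeff_derivative, PowerSeries.coeff_C_mul, hs]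
    cases k with
    | zero => simp
    | succ k =>
      rw [PowerSeries.coeff_succ_X_mul, PowerSeries.coeff_derivative]
      push_cast
      ring
  have dF : PowerSeries.derivative ℝ (B * A) = PowerSeries.C (ρ + θ) * (B * A)
      + PowerSeries.X * PowerSeries.derivative ℝ (B * A)
      - PowerSeries.X * (PowerSeries.C ρ * (B * A)) := by
    rw [Derivation.leibniz, dA, map_add]
    simp only [smul_eq_mul]
    linear_combination A * dB
  have h := congrArg (PowerSeries.coeff (n + 1)) dF
  rw [map_sub, map_add, PowerSeries.coeff_succ_X_mul, PowerSeries.coeff_succ_X_mul,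
    PowerSeries.coeff_C_mul, PowerSeries.coeff_C_mul, PowerSeries.coeff_derivative,
    PowerSeries.coeff_derivative] at h
  push_cast at h
  linear_combination h

lemma erlF_pos (ρ θ : ℝ) (hρ : 0 < ρ) (hθ : 0 < θ) (n : ℕ) : 0 < erlF ρ θ n := by
  unfold erlF
  refine Finset.sum_pos (fun l _ => ?_) ⟨0, by simp⟩
  have := ascPochhammer_pos l θ hθ
  positivity

/-- if P̂_0, …, P̂_m solve the Laplace-transformed forward Kolmogorov
system of the M/M/m/m loss model started in state n₀ ≤ m, then the transform of the
blocking probability is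
P̂_m = (n₀!/m!) ρ^{m−n₀} F_{n₀}(θ) / [(m+1) F_{m+1}(θ) − ρ F_m(θ)]. -/
theorem erlang_loss_blocking_transform (ρ θ : ℝ) (hρ : 0 < ρ) (hθ : 0 < θ)
    (m n₀ : ℕ) (hm : 1 ≤ m) (hn₀ : n₀ ≤ m) (P : ℕ → ℝ)
    (h0 : P 1 - (ρ + θ) * P 0 = -(if 0 = n₀ then (1 : ℝ) else 0))
    (hmid : ∀ n : ℕ, 1 ≤ n → n ≤ m - 1 →
      ((n : ℝ) + 1) * P (n + 1) + ρ * P (n - 1) - (ρ + θ + n) * P n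
        = -(if n = n₀ then (1 : ℝ) else 0))
    (htop : ρ * P (m - 1) - (θ + m) * P m = -(if m = n₀ then (1 : ℝ) else 0)) :
    P m = (n₀.factorial : ℝ) / m.factorial * ρ ^ (m - n₀) * erlF ρ θ n₀
      / (((m : ℝ) + 1) * erlF ρ θ (m + 1) - ρ * erlF ρ θ m) := by
  obtain ⟨k, rfl⟩ : ∃ k, m = k + 1 := ⟨m - 1, by omega⟩
  simp only [Nat.add_sub_cancel] at hmid htop
  obtain ⟨G, hG⟩ : ∃ G : ℕ → ℝ, ∀ n, G n = n.factorial / ρ ^ n * erlF ρ θ n :=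
    ⟨_, fun _ => rfl⟩
  have G0 : G 0 = 1 := by simp [hG, erlF]
  have G1 : ρ * G 1 = ρ + θ := by
    simp [hG, erlF, Finset.sum_range_succ]
    field_simp
  have hrec : ∀ n : ℕ, ρ * G (n + 2) = (ρ + θ + (n + 1)) * G (n + 1) - (n + 1) * G n := by
    intro n
    have h := erlF_rec ρ θ n
    simp only [hG, Nat.factorial_succ]
    push_cast
    have : (n.factorial : ℝ) ≠ 0 := by exact_mod_cast Nat.factorial_ne_zero n
    field_simp
    linear_combination ρ ^ (2 * n + 2) * h
  have key : ∀ n : ℕ, n ≤ k → G n * ((n : ℝ) + 1) * P (n + 1) - ρ * G (n + 1) * P n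
      = -(if n₀ ≤ n then G n₀ else 0) := by
    intro n
    induction n with
    | zero =>
      intro _
      rw [zero_add, G1, G0]
      by_cases h : n₀ = 0
      · subst h
        simp at h0 ⊢
        linarith
      · have h' : ¬ (0 = n₀) := fun e => h e.symm
        simp [h, h'] at h0 ⊢
        linarith
    | succ n ih =>
      intro hn
      have i := ih (by omega)
      have e := hmid (n + 1) (by omega) hn
      have r := hrec n
      simp only [Nat.add_sub_cancel] at e
      push_cast at e ⊢
      have hd : -(if n₀ ≤ n + 1 then G n₀ else 0) = -(if n₀ ≤ n then G n₀ else 0)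
          + G (n + 1) * (-(if n + 1 = n₀ then (1 : ℝ) else 0)) := by
        rcases lt_trichotomy n₀ (n + 1) with h | h | h
        · rw [if_pos (by omega), if_pos (by omega), if_neg (by omega)]; ring
        · rw [if_pos (by omega), if_neg (by omega), if_pos (by omega), h]; ring
        · rw [if_neg (by omega), if_neg (by omega), if_neg (by omega)]; ring
      rw [hd, ← i, ← e]
      linear_combination (-P (n + 1)) * r
  have hk := key k le_rfl
  have r := hrec k
  have fin : P (k + 1) * (ρ * G (k + 2) - ρ * G (k + 1)) = G n₀ := by
    push_cast at htop
    rcases Nat.lt_or_ge n₀ (k + 1) with h | h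
    · rw [if_pos (by omega)] at hk
      rw [if_neg (by omega)] at htop
      linear_combination P (k + 1) * r - hk - G (k + 1) * htop
    · have h : n₀ = k + 1 := by omega
      subst h
      rw [if_neg (by omega)] at hk
      rw [if_pos rfl] at htop
      linear_combination P (k + 1) * r - hk - G (k + 1) * htop
  have hf : ((k + 1).factorial : ℝ) ≠ 0 := by exact_mod_cast Nat.factorial_ne_zero _
  have hD : ρ * G (k + 2) - ρ * G (k + 1) = ((k + 1).factorial : ℝ) / ρ ^ (k + 1) *
      ((((k + 1 : ℕ) : ℝ) + 1) * erlF ρ θ (k + 1 + 1) - ρ * erlF ρ θ (k + 1)) := by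
    rw [hG, hG, Nat.factorial_succ (k + 1)]
    push_cast
    field_simp
    ring
  rw [hD, hG] at fin
  have hpos : (0 : ℝ) < n₀.factorial / ρ ^ n₀ * erlF ρ θ n₀ := by
    have := erlF_pos ρ θ hρ hθ n₀
    positivity
  have hne : (((k + 1 : ℕ) : ℝ) + 1) * erlF ρ θ (k + 1 + 1) - ρ * erlF ρ θ (k + 1) ≠ 0 := by
    intro h
    rw [h] at fin
    simp only [mul_zero] at fin
    linarith
  rw [eq_div_iff hne]
  generalize (((k + 1 : ℕ) : ℝ) + 1) * erlF ρ θ (k + 1 + 1) - ρ * erlF ρ θ (k + 1) = D at *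
  have hp : ρ ^ (k + 1) = ρ ^ (k + 1 - n₀) * ρ ^ n₀ := by
    rw [← pow_add, Nat.sub_add_cancel hn₀]
  rw [hp] at fin
  field_simp at fin ⊢
  linear_combination fin
end

section
/- Fix reals ρ > 0 and θ > 0 and natural numbers m ≥ 1 and 0 ≤ n₀ ≤ m. Suppose P̂_0, …, P̂_m are real numbers satisfying: P̂_1 − (ρ+θ) P̂_0 = −δ(0,n₀); (n+1) P̂_{n+1} + ρ P̂_{n−1} − (ρ+θ+n) P̂_n = −δ(n,n₀) for 1 ≤ n ≤ m−1; and ρ P̂_{m−1} − (θ+m) P̂_m = −δ(m,n₀). Then P̂_m = [Σ_{ℓ=0}^{n₀} C(n₀,ℓ) ρ^{−ℓ} Γ(θ+ℓ)] / [Σ_{ℓ=0}^{m} C(m,ℓ) ρ^{−ℓ} Γ(θ+ℓ+1)], where Γ is the real Gamma function and C(·,·) the binomial coefficient. -/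
open Finset

noncomputable def eD (ρ θ : ℝ) (n : ℕ) : ℝ :=
  ∑ ℓ ∈ Finset.range (n + 1), (n.choose ℓ : ℝ) * ρ ^ (-(ℓ : ℤ)) * Real.Gamma (θ + ℓ)

noncomputable def eE (ρ θ : ℝ) (n : ℕ) : ℝ :=
  ∑ ℓ ∈ Finset.range (n + 1), (n.choose ℓ : ℝ) * ρ ^ (-(ℓ : ℤ)) * Real.Gamma (θ + ℓ + 1)

lemma eD_diff (ρ θ : ℝ) (hρ : 0 < ρ) (n : ℕ) :
    ρ * eD ρ θ (n + 1) = ρ * eD ρ θ n + eE ρ θ n := by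
  have h := Finset.sum_choose_succ_mul
    (fun i _ => ρ ^ (-(i : ℤ)) * Real.Gamma (θ + i)) n
  have e1 : eD ρ θ (n + 1) = eD ρ θ n + ∑ i ∈ Finset.range (n + 1),
      (n.choose i : ℝ) * (ρ ^ (-((i + 1 : ℕ) : ℤ)) * Real.Gamma (θ + (i + 1 : ℕ))) := by
    unfold eD
    simp only [mul_assoc]
    rw [show n + 1 + 1 = n + 2 from rfl, h]
  rw [e1, mul_add]
  congr 1
  unfold eE
  rw [Finset.mul_sum]
  refine Finset.sum_congr rfl fun i _ => ?_
  have : ρ ^ (-(i : ℤ)) = ρ * ρ ^ (-((i + 1 : ℕ) : ℤ)) := by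
    rw [← zpow_one_add₀ hρ.ne']
    congr 1
    push_cast
    ring
  rw [this]
  push_cast
  rw [← add_assoc]
  ring

lemma eE_succ (ρ θ : ℝ) (hθ : 0 < θ) (n : ℕ) :
    eE ρ θ (n + 1) = (θ + (n + 1)) * eD ρ θ (n + 1) - (n + 1) * eD ρ θ n := by
  have e : eD ρ θ n = ∑ ℓ ∈ Finset.range (n + 1 + 1),
      (n.choose ℓ : ℝ) * ρ ^ (-(ℓ : ℤ)) * Real.Gamma (θ + ℓ) := by
    rw [Finset.sum_range_succ]
    simp [eD]
  rw [e]
  unfold eE eD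
  rw [Finset.mul_sum, Finset.mul_sum, ← Finset.sum_sub_distrib]
  refine Finset.sum_congr rfl fun i hi => ?_
  have hi' : i ≤ n + 1 := by
    have := Finset.mem_range.mp hi
    omega
  rw [Real.Gamma_add_one (by positivity)]
  have hc : ((n : ℝ) + 1) * n.choose i = (n + 1).choose i * ((n : ℝ) + 1 - i) := by
    have := Nat.choose_mul_succ_eq n i
    have h2 : ((n.choose i * (n + 1) : ℕ) : ℝ) = (((n + 1).choose i * (n + 1 - i) : ℕ) : ℝ) := by
      rw [this]
    push_cast [Nat.cast_sub hi'] at h2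
    linarith
  linear_combination (ρ ^ (-(i : ℤ)) * Real.Gamma (θ + i)) * hc

lemma eE_zero (ρ θ : ℝ) (hθ : 0 < θ) : eE ρ θ 0 = θ * eD ρ θ 0 := by
  simp [eE, eD, Real.Gamma_add_one hθ.ne']

lemma eE_pos (ρ θ : ℝ) (hρ : 0 < ρ) (hθ : 0 < θ) (n : ℕ) : 0 < eE ρ θ n := by
  unfold eE
  refine Finset.sum_pos (fun i hi => ?_) (by simp)
  have h1 : 0 < n.choose i := Nat.choose_pos (by have := Finset.mem_range.mp hi; omega)
  have h2 : 0 < Real.Gamma (θ + i + 1) := Real.Gamma_pos_of_pos (by positivity)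
  positivity

/-- if P̂_0, …, P̂_m solve the Laplace-transformed forward Kolmogorov
system of the M/M/m/m loss model started in state n₀ ≤ m, then
P̂_m = [Σ_{ℓ=0}^{n₀} C(n₀,ℓ) ρ^{−ℓ} Γ(θ+ℓ)] / [Σ_{ℓ=0}^{m} C(m,ℓ) ρ^{−ℓ} Γ(θ+ℓ+1)]. -/
theorem erlang_loss_blocking_transform_gamma (ρ θ : ℝ) (hρ : 0 < ρ) (hθ : 0 < θ)
    (m n₀ : ℕ) (hm : 1 ≤ m) (hn₀ : n₀ ≤ m) (P : ℕ → ℝ)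
    (h0 : P 1 - (ρ + θ) * P 0 = -(if 0 = n₀ then (1 : ℝ) else 0))
    (hmid : ∀ n : ℕ, 1 ≤ n → n ≤ m - 1 →
      ((n : ℝ) + 1) * P (n + 1) + ρ * P (n - 1) - (ρ + θ + n) * P n
        = -(if n = n₀ then (1 : ℝ) else 0))
    (htop : ρ * P (m - 1) - (θ + m) * P m = -(if m = n₀ then (1 : ℝ) else 0)) :
    P m = (∑ ℓ ∈ Finset.range (n₀ + 1),
            (n₀.choose ℓ : ℝ) * ρ ^ (-(ℓ : ℤ)) * Real.Gamma (θ + ℓ))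
      / (∑ ℓ ∈ Finset.range (m + 1),
            (m.choose ℓ : ℝ) * ρ ^ (-(ℓ : ℤ)) * Real.Gamma (θ + ℓ + 1)) := by
  change P m = eD ρ θ n₀ / eE ρ θ m
  rw [eq_div_iff (eE_pos ρ θ hρ hθ m).ne']
  obtain ⟨M, rfl⟩ : ∃ M, m = M + 1 := ⟨m - 1, by omega⟩
  have key : ∀ k : ℕ, k ≤ M → ((k : ℝ) + 1) * P (k + 1) * eD ρ θ k - ρ * P k * eD ρ θ (k + 1)
      = -(if n₀ ≤ k then eD ρ θ n₀ else 0) := by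
    intro k
    induction k with
    | zero =>
      intro _
      have a := eD_diff ρ θ hρ 0
      rw [eE_zero ρ θ hθ] at a
      have b : (if n₀ ≤ 0 then eD ρ θ n₀ else 0) = (if 0 = n₀ then (1 : ℝ) else 0) * eD ρ θ 0 := by
        rcases Nat.eq_zero_or_pos n₀ with h | h
        · simp [h]
        · rw [if_neg (by omega), if_neg (by omega), zero_mul]
      rw [b]
      push_cast
      simp only [zero_add] at a ⊢
      linear_combination eD ρ θ 0 * h0 - P 0 * a
    | succ k ih =>
      intro hk
      have ih := ih (by omega)
      have a := eD_diff ρ θ hρ (k + 1)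
      rw [eE_succ ρ θ hθ] at a
      have h := hmid (k + 1) (by omega) (by omega)
      rw [Nat.add_sub_cancel] at h
      have b : (if n₀ ≤ k + 1 then eD ρ θ n₀ else 0) = (if n₀ ≤ k then eD ρ θ n₀ else 0)
          + (if k + 1 = n₀ then (1 : ℝ) else 0) * eD ρ θ (k + 1) := by
        rcases lt_trichotomy n₀ (k + 1) with h | h | h
        · rw [if_pos (by omega), if_pos (by omega), if_neg (by omega)]; ring
        · simp [h]
        · rw [if_neg (by omega), if_neg (by omega), if_neg (by omega)]; ring
      rw [b]
      push_cast at h ⊢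
      linear_combination ih + eD ρ θ (k + 1) * h - P (k + 1) * a
  have hk := key M le_rfl
  rw [Nat.add_sub_cancel] at htop
  rw [eE_succ ρ θ hθ]
  have b : eD ρ θ n₀ = (if n₀ ≤ M then eD ρ θ n₀ else 0)
      + (if M + 1 = n₀ then (1 : ℝ) else 0) * eD ρ θ (M + 1) := by
    rcases Nat.lt_or_ge M n₀ with h | h
    · have : n₀ = M + 1 := by omega
      simp [this]
    · rw [if_pos h, if_neg (by omega)]; ring
  rw [b]
  push_cast at htop
  linear_combination -hk - eD ρ θ (M + 1) * htop
end

section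
/- Fix reals ρ > 0 and η > 0 and natural numbers 1 ≤ m < n*. Define q_n for 0 ≤ n ≤ n* by: q_n = (1/ρ) Σ_{J=n}^{n*−1} Σ_{ℓ=m+1}^{J} (ρ/η)^{ℓ−J} Γ(J−m+1+m/η)/Γ(ℓ−m+1+m/η) + (1/ρ)(ρ/η)^m [1/Γ(1+m/η)] [Σ_{ℓ=0}^{m} (m!/ℓ!) ρ^{ℓ−m}] [Σ_{J=n}^{n*−1} (η/ρ)^J Γ(J−m+1+m/η)] for m ≤ n ≤ n* (so q_{n*} = 0), and q_n = q_m + Σ_{j=n}^{m−1} j! ρ^{−j} Σ_{ℓ=0}^{j} ρ^{ℓ−1}/ℓ! for 0 ≤ n ≤ m. Then ρ(q_{n+1} − q_n) + n(q_{n−1} − q_n) = −1 for 0 ≤ n ≤ m, and ρ(q_{n+1} − q_n) + [m + (n−m)η](q_{n−1} − q_n) = −1 for m ≤ n ≤ n*−1 (with the n = 0 equation reading ρ(q_1 − q_0) = −1). -/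
open Finset

/-- the explicit formulas for the conditional mean first passage time
q_n = E[τ(n*) | N(0)=n] of the Erlang A model satisfy the defining recurrences,
with q_{n*} = 0. -/
theorem erlangA_mean_first_passage (ρ η : ℝ) (hρ : 0 < ρ) (hη : 0 < η)
    (m nst : ℕ) (hm : 1 ≤ m) (hmn : m < nst)
    (qU q : ℕ → ℝ)
    (hqU : ∀ n : ℕ, qU n =
      (1 / ρ) * ∑ J ∈ Finset.Ico n nst, ∑ ℓ ∈ Finset.Icc (m + 1) J,
          (ρ / η) ^ ((ℓ : ℤ) - (J : ℤ)) *
            Real.Gamma ((J : ℝ) - m + 1 + m / η) / Real.Gamma ((ℓ : ℝ) - m + 1 + m / η)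
        + (1 / ρ) * (ρ / η) ^ m * (1 / Real.Gamma (1 + m / η)) *
            (∑ ℓ ∈ Finset.range (m + 1),
              (m.factorial : ℝ) / ℓ.factorial * ρ ^ ((ℓ : ℤ) - (m : ℤ))) *
            (∑ J ∈ Finset.Ico n nst,
              (η / ρ) ^ J * Real.Gamma ((J : ℝ) - m + 1 + m / η)))
    (hq : ∀ n : ℕ, q n = if m ≤ n then qU n
      else qU m + ∑ j ∈ Finset.Ico n m,
        (j.factorial : ℝ) * ρ ^ (-(j : ℤ)) *
          ∑ ℓ ∈ Finset.range (j + 1), ρ ^ ((ℓ : ℤ) - 1) / ℓ.factorial) :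
    q nst = 0
    ∧ (∀ n : ℕ, n ≤ m →
        ρ * (q (n + 1) - q n) + (n : ℝ) * (q (n - 1) - q n) = -1)
    ∧ ∀ n : ℕ, m ≤ n → n < nst →
        ρ * (q (n + 1) - q n) + ((m : ℝ) + ((n : ℝ) - m) * η) * (q (n - 1) - q n)
          = -1 := by
  have hρ0 : ρ ≠ 0 := hρ.ne'
  have hη0 : η ≠ 0 := hη.ne'
  have hm0 : (0 : ℝ) < m / η := by
    have : (0 : ℝ) < m := by exact_mod_cast hm
    positivity
  obtain ⟨e, he⟩ : ∃ e : ℕ → ℝ, ∀ j, e j = (j.factorial : ℝ) * ρ ^ (-(j : ℤ)) *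
          ∑ ℓ ∈ Finset.range (j + 1), ρ ^ ((ℓ : ℤ) - 1) / ℓ.factorial := ⟨_, fun _ => rfl⟩
  obtain ⟨G, hG⟩ : ∃ G : ℕ → ℝ, ∀ j, G j = Real.Gamma ((j : ℝ) - m + 1 + m / η) :=
    ⟨_, fun _ => rfl⟩
  obtain ⟨S, hS⟩ : ∃ S : ℝ, S = ∑ ℓ ∈ Finset.range (m + 1),
              (m.factorial : ℝ) / ℓ.factorial * ρ ^ ((ℓ : ℤ) - (m : ℤ)) := ⟨_, rfl⟩
  obtain ⟨A, hA⟩ : ∃ A : ℕ → ℝ, ∀ J, A J = ∑ ℓ ∈ Finset.Icc (m + 1) J,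
          (ρ / η) ^ ((ℓ : ℤ) - (J : ℤ)) * G J / G ℓ := ⟨_, fun _ => rfl⟩
  have hGm : G m = Real.Gamma (1 + m / η) := by rw [hG]; congr 1; ring
  have hGpos : ∀ j, m ≤ j → 0 < G j := by
    intro j hj
    rw [hG]
    apply Real.Gamma_pos_of_pos
    have : (m : ℝ) ≤ j := by exact_mod_cast hj
    linarith
  have hGs : ∀ j, m ≤ j → η * G (j + 1) = (m + ((j + 1 : ℕ) - m : ℝ) * η) * G j := by
    intro j hj
    have hj' : (m : ℝ) ≤ j := by exact_mod_cast hj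
    have h := Real.Gamma_add_one (s := (j : ℝ) - m + 1 + m / η) (by linarith)
    have h2 : G (j + 1) = ((j : ℝ) - m + 1 + m / η) * G j := by
      rw [hG, hG, ← h]; congr 1; push_cast; ring
    rw [h2]; push_cast; field_simp; ring
  simp only [← hG, ← hGm, ← hS, ← hA] at hqU
  simp only [← he] at hq
  obtain ⟨f, hf⟩ : ∃ f : ℕ → ℝ, ∀ n, f n = (1 / ρ) * A n +
      (1 / ρ) * (ρ / η) ^ m * (1 / G m) * S * ((η / ρ) ^ n * G n) := ⟨_, fun _ => rfl⟩
  have hqf : ∀ n, n < nst → qU n = f n + qU (n + 1) := by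
    intro n hn
    rw [hqU n, hqU (n + 1), hf, Finset.sum_eq_sum_Ico_succ_bot hn,
      Finset.sum_eq_sum_Ico_succ_bot hn]
    ring
  have he0 : ρ * e 0 = 1 := by rw [he]; simp [hρ0]
  have hes : ∀ j, ρ * e (j + 1) = 1 + (j + 1 : ℕ) * e j := by
    intro j
    rw [he, he, Finset.sum_range_succ _ (j + 1), Nat.factorial_succ]
    have h1 : ((j.factorial : ℕ) : ℝ) ≠ 0 := by exact_mod_cast j.factorial_ne_zero
    have h3 : ((j + 1 : ℕ) : ℝ) ≠ 0 := by exact_mod_cast j.succ_ne_zero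
    generalize (∑ ℓ ∈ Finset.range (j + 1), ρ ^ ((ℓ : ℤ) - 1) / (ℓ.factorial : ℝ)) = T
    have h4 : ρ ^ (-((j + 1 : ℕ) : ℤ)) = (ρ ^ (j + 1))⁻¹ := by rw [zpow_neg, zpow_natCast]
    have h5 : ρ ^ (-(j : ℤ)) = (ρ ^ j)⁻¹ := by rw [zpow_neg, zpow_natCast]
    have h6 : ρ ^ (((j + 1 : ℕ) : ℤ) - 1) = ρ ^ j := by
      rw [← zpow_natCast]; congr 1; push_cast; ring
    rw [h4, h5, h6, Nat.cast_mul]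
    generalize ((j + 1 : ℕ) : ℝ) = c at *
    field_simp
    ring
  have hfm : f m = e m := by
    have hAm : A m = 0 := by rw [hA]; simp
    have h1 : (ρ / η) ^ m * (η / ρ) ^ m = 1 := by
      rw [← mul_pow]; field_simp; simp
    have h2 := (hGpos m le_rfl).ne'
    have h3 : f m = (1 / ρ) * S := by
      rw [hf, hAm]
      calc _ = (1 / ρ) * S * ((ρ / η) ^ m * (η / ρ) ^ m) * (G m / G m) := by ring
        _ = _ := by rw [h1, div_self h2]; ring
    rw [h3, he, hS, Finset.mul_sum, Finset.mul_sum]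
    apply Finset.sum_congr rfl
    intro l _
    rw [zpow_sub₀ hρ0, zpow_sub₀ hρ0, zpow_neg]
    simp only [zpow_one]
    field_simp
  have hAs : ∀ n, m ≤ n → ρ * A (n + 1) = ρ + (m + ((n + 1 : ℕ) - m : ℝ) * η) * A n := by
    intro n hn
    rw [hA, hA, Finset.sum_Icc_succ_top (by omega)]
    have h2 := (hGpos (n + 1) (by omega)).ne'
    rw [sub_self, zpow_zero, one_mul, div_self h2, mul_add, mul_one, Finset.mul_sum,
      Finset.mul_sum, add_comm]
    congr 1
    apply Finset.sum_congr rfl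
    intro l hl
    have h1 : (ρ / η) ^ ((l : ℤ) - (n : ℤ)) = (ρ / η) ^ ((l : ℤ) - ((n + 1 : ℕ) : ℤ)) * (ρ / η) := by
      rw [← zpow_add_one₀ (by positivity)]; congr 1; push_cast; ring
    rw [h1]
    have := hGs n hn
    generalize (ρ / η) ^ ((l : ℤ) - ((n + 1 : ℕ) : ℤ)) = z
    calc _ = ρ / η * z / G l * (η * G (n + 1)) := by field_simp
      _ = _ := by rw [this]; ring
  have hfs : ∀ n, m ≤ n → ρ * f (n + 1) = 1 + (m + ((n + 1 : ℕ) - m : ℝ) * η) * f n := by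
    intro n hn
    rw [hf, hf]
    have h1 := hAs n hn
    have h2 := hGs n hn
    have h3 : ρ * (η / ρ) ^ (n + 1) = η * (η / ρ) ^ n := by
      rw [pow_succ]; field_simp
    generalize (1 / ρ) * (ρ / η) ^ m * (1 / G m) * S = c
    generalize (m + ((n + 1 : ℕ) - m : ℝ) * η) = μ at *
    calc _ = (1 / ρ) * (ρ * A (n + 1)) + c * (ρ * (η / ρ) ^ (n + 1)) * G (n + 1) := by ring
      _ = (1 / ρ) * (ρ + μ * A n) + c * (η / ρ) ^ n * (η * G (n + 1)) := by rw [h1, h3]; ring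
      _ = _ := by rw [h2]; field_simp; ring
  have hup : ∀ n, m ≤ n → n < nst → q n = f n + q (n + 1) := by
    intro n h1 h2
    rw [hq n, hq (n + 1), if_pos h1, if_pos (by omega), hqf n h2]
  have hlow : ∀ n, n ≤ m → q n = e n + q (n + 1) := by
    intro n h
    rcases h.eq_or_lt with rfl | h
    · rw [hup n le_rfl hmn, hfm]
    · rw [hq n, if_neg (by omega), Finset.sum_eq_sum_Ico_succ_bot h, hq (n + 1)]
      split_ifs with h'
      · have : n + 1 = m := by omega
        subst this
        simp; ring
      · ring
  have hpart : ∀ n : ℕ, n ≤ m →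
        ρ * (q (n + 1) - q n) + (n : ℝ) * (q (n - 1) - q n) = -1 := by
    intro n hn
    rcases n with _ | n
    · rw [hlow 0 hn]; push_cast; linarith
    · have h1 := hlow (n + 1) hn
      have h2 := hlow n (by omega)
      have h3 := hes n
      rw [Nat.add_sub_cancel, h2, h1]
      linarith
  refine ⟨?_, hpart, ?_⟩
  · rw [hq, if_pos hmn.le, hqU]; simp
  · intro n h1 h2
    rcases h1.eq_or_lt with rfl | h
    · have := hpart m le_rfl
      simpa using this
    · obtain ⟨k, rfl⟩ : ∃ k, n = k + 1 := ⟨n - 1, by omega⟩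
      have h3 := hup (k + 1) h1 h2
      have h4 := hup k (by omega) (by omega)
      have h5 := hfs k (by omega)
      rw [Nat.add_sub_cancel, h4, h3]
      linarith
end

section
/- Fix a real ρ > 0 and a natural number m ≥ 1, and define F′_n(0) = Σ_{ℓ=1}^{n} ρ^{n−ℓ}/((n−ℓ)! ℓ) for n ∈ ℕ. Then: (i) the function θ ↦ F_n(θ) = Σ_{ℓ=0}^{n} [ρ^{n−ℓ}/((n−ℓ)! ℓ!)] (θ)_ℓ is differentiable at θ = 0 with derivative F′_n(0); and (ii) m F′_m(0) − ρ F′_{m−1}(0) = Σ_{J=0}^{m−1} ρ^J/J!. -/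
open Finset

/-- F′_n(0) = Σ_{ℓ=1}^{n} ρ^{n−ℓ}/((n−ℓ)! ℓ). -/
noncomputable def erlFderiv0 (ρ : ℝ) (n : ℕ) : ℝ :=
  ∑ ℓ ∈ Finset.Icc 1 n, ρ ^ (n - ℓ) / ((n - ℓ).factorial * ℓ)

theorem erl_aux_deriv (l : ℕ) :
    HasDerivAt (fun θ : ℝ => (ascPochhammer ℝ (l + 1)).eval θ) (l.factorial : ℝ) 0 := by
  induction l with
  | zero => simpa using hasDerivAt_id' (0 : ℝ)
  | succ l ih =>
    have h := ih.mul ((hasDerivAt_id (0 : ℝ)).add_const ((l + 1 : ℕ) : ℝ))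
    have e : (fun θ : ℝ => (ascPochhammer ℝ (l + 1 + 1)).eval θ)
        = (fun θ : ℝ => (ascPochhammer ℝ (l + 1)).eval θ) * (fun θ => id θ + ((l + 1 : ℕ) : ℝ)) := by
      funext θ
      simp only [Pi.mul_apply, id]
      exact ascPochhammer_succ_eval (l + 1) θ
    rw [e]
    refine h.congr_deriv ?_
    simp [Nat.factorial_succ]
    ring

theorem erl_aux_sum (ρ : ℝ) (n : ℕ) : erlFderiv0 ρ n =
    ∑ i ∈ Finset.range n, ρ ^ (n - (i + 1)) / ((n - (i + 1)).factorial * ((i + 1 : ℕ) : ℝ)) := by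
  unfold erlFderiv0
  rw [Finset.range_eq_Ico,
    Finset.sum_Ico_add' (fun l : ℕ => ρ ^ (n - l) / ((n - l).factorial * (l : ℝ))) 0 n 1]
  rfl

/-- (i) θ ↦ F_n(θ) is differentiable at θ = 0 with derivative F′_n(0);
(ii) m F′_m(0) − ρ F′_{m−1}(0) = Σ_{J=0}^{m−1} ρ^J/J!. -/
theorem erlF_derivative_at_zero (ρ : ℝ) (hρ : 0 < ρ) (m : ℕ) (hm : 1 ≤ m) :
    (∀ n : ℕ, HasDerivAt (fun θ : ℝ => erlF ρ θ n) (erlFderiv0 ρ n) 0)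
    ∧ (m : ℝ) * erlFderiv0 ρ m - ρ * erlFderiv0 ρ (m - 1)
      = ∑ J ∈ Finset.range m, ρ ^ J / J.factorial := by
  constructor
  · intro n
    rw [erl_aux_sum]
    unfold erlF
    simp only [Finset.sum_range_succ' _ n]
    have h0 : HasDerivAt (fun θ : ℝ => ρ ^ (n - 0) / ((n - 0).factorial * (Nat.factorial 0)) *
        (ascPochhammer ℝ 0).eval θ) 0 0 := by
      simpa using hasDerivAt_const (0 : ℝ) (ρ ^ n / n.factorial)
    rw [← add_zero (∑ i ∈ Finset.range n, _)]
    refine HasDerivAt.add (HasDerivAt.fun_sum fun i _ => ?_) h0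
    refine ((erl_aux_deriv i).const_mul _).congr_deriv ?_
    have h1 : (i.factorial : ℝ) ≠ 0 := by positivity
    have h2 : ((n - (i + 1)).factorial : ℝ) ≠ 0 := by positivity
    rw [Nat.factorial_succ]
    push_cast
    field_simp
  · obtain ⟨k, rfl⟩ : ∃ k, m = k + 1 := ⟨m - 1, by omega⟩
    rw [erl_aux_sum, erl_aux_sum, ← Finset.sum_range_reflect (fun J => ρ ^ J / (J.factorial : ℝ)),
      Finset.mul_sum, Finset.mul_sum, Finset.sum_range_succ, Finset.sum_range_succ,
      add_sub_right_comm, show Finset.range (k + 1 - 1) = Finset.range k from rfl, ← Finset.sum_sub_distrib]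
    congr 1
    · refine Finset.sum_congr rfl fun i hi => ?_
      obtain ⟨j, rfl⟩ : ∃ j, k = i + 1 + j := ⟨k - (i + 1), by have := Finset.mem_range.1 hi; omega⟩
      have e1 : i + 1 + j + 1 - (i + 1) = j + 1 := by omega
      have e2 : i + 1 + j + 1 - 1 - (i + 1) = j := by omega
      have e3 : i + 1 + j + 1 - 1 - i = j + 1 := by omega
      rw [e1, e2, e3, Nat.factorial_succ]
      have h2 : (j.factorial : ℝ) ≠ 0 := by positivity
      push_cast
      field_simp
      ring
    · have h : (k : ℝ) + 1 ≠ 0 := by positivity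
      simp [h]
end

section
/- Fix reals ρ > 0 and η > 0 and natural numbers m ≥ 1 and m ≤ n < n*, and set ν = m/η. For integers p ≥ m define h(p) = (ρ/η)^{p−m+ν}/Γ(p−m+1+ν), where Γ is the real Gamma function. Then all the series below converge and (1/ρ) Σ_{J=n}^{n*−1} (1/h(J)) Σ_{p=J+1}^{∞} h(p) − (1/η) Σ_{k=n}^{n*−1} 1/(k−m+1+ν) + (1/η) Σ_{J=1}^{∞} (1/J) [h(n*+J)/h(n*) − h(n+J)/h(n)] = 0. -/
open Finset

/-- h(p) = H_p(0) = (ρ/η)^{p−m+ν}/Γ(p−m+1+ν) with ν = m/η, the value at θ = 0 of the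
contour-integral solution H_p(θ;m) of the Erlang A difference equations. -/
noncomputable def erlH0 (ρ η : ℝ) (m : ℕ) (p : ℕ) : ℝ :=
  (ρ / η) ^ ((p : ℝ) - m + m / η) / Real.Gamma ((p : ℝ) - m + 1 + m / η)

lemma erlH0_pos (ρ η : ℝ) (hρ : 0 < ρ) (hη : 0 < η) (m p : ℕ) (hm : 1 ≤ m) (hp : m ≤ p) :
    0 < erlH0 ρ η m p := by
  unfold erlH0
  have h1 : (m : ℝ) ≤ p := by exact_mod_cast hp
  have h2 : (0 : ℝ) < m / η := by positivity
  exact div_pos (Real.rpow_pos_of_pos (by positivity) _) (Real.Gamma_pos_of_pos (by linarith))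

lemma erlH0_succ (ρ η : ℝ) (hρ : 0 < ρ) (hη : 0 < η) (m p : ℕ) (hm : 1 ≤ m) (hp : m ≤ p) :
    erlH0 ρ η m (p + 1) = erlH0 ρ η m p * (ρ / η) / ((p : ℝ) - m + 1 + m / η) := by
  unfold erlH0
  have h1 : (m : ℝ) ≤ p := by exact_mod_cast hp
  have h2 : (0 : ℝ) < m / η := by positivity
  have h3 : 0 < (p : ℝ) - m + 1 + m / η := by linarith
  have h4 := Real.Gamma_pos_of_pos h3
  have e1 : ((p + 1 : ℕ) : ℝ) - m + m / η = ((p : ℝ) - m + m / η) + 1 := by push_cast; ring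
  have e2 : ((p + 1 : ℕ) : ℝ) - m + 1 + m / η = ((p : ℝ) - m + 1 + m / η) + 1 := by
    push_cast; ring
  rw [e1, e2, Real.Gamma_add_one h3.ne', Real.rpow_add_one (by positivity)]
  generalize (p : ℝ) - m + 1 + m / η = c at *
  rw [div_mul_eq_mul_div, div_div, mul_comm c]

lemma erlH0_summable (ρ η : ℝ) (hρ : 0 < ρ) (hη : 0 < η) (m : ℕ) (hm : 1 ≤ m) :
    Summable (fun p : ℕ => erlH0 ρ η m p) := by
  rw [← summable_nat_add_iff m]
  refine summable_of_ratio_test_tendsto_lt_one (l := 0) one_pos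
    (Filter.Eventually.of_forall fun p => (erlH0_pos ρ η hρ hη m (p + m) hm (by omega)).ne') ?_
  have h2 : (0 : ℝ) < m / η := by positivity
  have key : ∀ p : ℕ, ‖erlH0 ρ η m (p + 1 + m)‖ / ‖erlH0 ρ η m (p + m)‖
      = (ρ / η) / ((p : ℝ) + (1 + m / η)) := by
    intro p
    have a := erlH0_pos ρ η hρ hη m (p + m) hm (by omega)
    have b := erlH0_pos ρ η hρ hη m (p + 1 + m) hm (by omega)
    rw [Real.norm_of_nonneg a.le, Real.norm_of_nonneg b.le,
      show p + 1 + m = (p + m) + 1 by omega, erlH0_succ ρ η hρ hη m (p + m) hm (by omega)]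
    have e : ((p + m : ℕ) : ℝ) - m + 1 + m / η = (p : ℝ) + (1 + m / η) := by push_cast; ring
    rw [e, mul_div_assoc, mul_div_cancel_left₀ _ a.ne']
  simp_rw [key]
  exact Filter.Tendsto.const_div_atTop
    (Filter.tendsto_atTop_add_const_right _ _ tendsto_natCast_atTop_atTop) _

lemma erlH0_summable_add (ρ η : ℝ) (hρ : 0 < ρ) (hη : 0 < η) (m k : ℕ) (hm : 1 ≤ m) :
    Summable (fun p : ℕ => erlH0 ρ η m (k + p)) := by
  have := (summable_nat_add_iff k).2 (erlH0_summable ρ η hρ hη m hm)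
  simpa only [add_comm] using this

lemma erlH0_summable_div (ρ η : ℝ) (hρ : 0 < ρ) (hη : 0 < η) (m k : ℕ) (hm : 1 ≤ m)
    (hk : m ≤ k) :
    Summable (fun J : ℕ => (1 / ((J : ℝ) + 1)) *
      (erlH0 ρ η m (k + (J + 1)) / erlH0 ρ η m k)) := by
  have h1 := (erlH0_summable_add ρ η hρ hη m (k + 1) hm).div_const (erlH0 ρ η m k)
  have a := erlH0_pos ρ η hρ hη m k hm hk
  refine Summable.of_nonneg_of_le (fun J => ?_) (fun J => ?_) h1
  · have b := erlH0_pos ρ η hρ hη m (k + (J + 1)) hm (by omega)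
    positivity
  · have b := erlH0_pos ρ η hρ hη m (k + (J + 1)) hm (by omega)
    rw [show k + 1 + J = k + (J + 1) by omega]
    refine mul_le_of_le_one_left (by positivity) ?_
    rw [div_le_one (by positivity)]
    have : (0 : ℝ) ≤ J := by positivity
    linarith

lemma erlH0_step (ρ η : ℝ) (hρ : 0 < ρ) (hη : 0 < η) (m k : ℕ) (hm : 1 ≤ m) (hk : m ≤ k) :
    (1 / ρ) * ((1 / erlH0 ρ η m k) * ∑' p : ℕ, erlH0 ρ η m (k + 1 + p))
      - (1 / η) * (1 / ((k : ℝ) - m + 1 + m / η))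
      + (1 / η) * (∑' J : ℕ, (1 / ((J : ℝ) + 1)) *
          (erlH0 ρ η m (k + 1 + (J + 1)) / erlH0 ρ η m (k + 1))
        - ∑' J : ℕ, (1 / ((J : ℝ) + 1)) * (erlH0 ρ η m (k + (J + 1)) / erlH0 ρ η m k)) = 0 := by
  have a := erlH0_pos ρ η hρ hη m k hm hk
  have h2 : (0 : ℝ) < m / η := by positivity
  have h1 : (m : ℝ) ≤ k := by exact_mod_cast hk
  have hc : 0 < (k : ℝ) - m + 1 + m / η := by linarith
  rw [← (erlH0_summable_div ρ η hρ hη m (k + 1) hm (by omega)).tsum_sub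
    (erlH0_summable_div ρ η hρ hη m k hm hk)]
  have key : ∀ J : ℕ, (1 / ((J : ℝ) + 1)) *
          (erlH0 ρ η m (k + 1 + (J + 1)) / erlH0 ρ η m (k + 1))
        - (1 / ((J : ℝ) + 1)) * (erlH0 ρ η m (k + (J + 1)) / erlH0 ρ η m k)
        = (-(η / ρ) / erlH0 ρ η m k) * erlH0 ρ η m (k + 1 + (J + 1)) := by
    intro J
    have b := erlH0_pos ρ η hρ hη m (k + (J + 1)) hm (by omega)
    rw [show k + 1 + (J + 1) = k + (J + 1) + 1 by omega,
      erlH0_succ ρ η hρ hη m k hm hk, erlH0_succ ρ η hρ hη m (k + (J + 1)) hm (by omega)]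
    have e : ((k + (J + 1) : ℕ) : ℝ) - m + 1 + m / η
        = ((k : ℝ) - m + 1 + m / η) + (J + 1) := by push_cast; ring
    rw [e]
    have hJ : (0 : ℝ) < (J : ℝ) + 1 := by positivity
    generalize (k : ℝ) - m + 1 + m / η = c at *
    generalize (J : ℝ) + 1 = j at *
    have : 0 < c + j := by linarith
    field_simp
    ring
  simp_rw [key]
  rw [tsum_mul_left, (erlH0_summable_add ρ η hρ hη m (k + 1) hm).tsum_eq_zero_add, add_zero,
    erlH0_succ ρ η hρ hη m k hm hk]
  generalize (k : ℝ) - m + 1 + m / η = c at *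
  field_simp
  ring

/-- the summation identity, proved by backward induction in the paper,
reconciling the two expressions for the conditional mean first passage time of the
Erlang A model.  Here the digamma difference ψ(n−m+1+ν) − ψ(n*−m+1+ν) is written as
the finite sum −Σ_{k=n}^{n*−1} 1/(k−m+1+ν). -/
theorem erlangA_mean_first_passage_summation_identity (ρ η : ℝ)
    (hρ : 0 < ρ) (hη : 0 < η) (m n nst : ℕ) (hm : 1 ≤ m) (hn : m ≤ n) (hnn : n < nst) :
    Summable (fun p : ℕ => erlH0 ρ η m p)
    ∧ Summable (fun J : ℕ => (1 / ((J : ℝ) + 1)) *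
        (erlH0 ρ η m (nst + (J + 1)) / erlH0 ρ η m nst
          - erlH0 ρ η m (n + (J + 1)) / erlH0 ρ η m n))
    ∧ (1 / ρ) * (∑ J ∈ Finset.Ico n nst,
          (1 / erlH0 ρ η m J) * ∑' p : ℕ, erlH0 ρ η m (J + 1 + p))
        - (1 / η) * (∑ k ∈ Finset.Ico n nst, 1 / ((k : ℝ) - m + 1 + m / η))
        + (1 / η) * ∑' J : ℕ, (1 / ((J : ℝ) + 1)) *
            (erlH0 ρ η m (nst + (J + 1)) / erlH0 ρ η m nst
              - erlH0 ρ η m (n + (J + 1)) / erlH0 ρ η m n)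
      = 0 := by
  have hs1 := erlH0_summable_div ρ η hρ hη m nst hm (by omega)
  have hs2 := erlH0_summable_div ρ η hρ hη m n hm hn
  refine ⟨erlH0_summable ρ η hρ hη m hm, ?_, ?_⟩
  · simp_rw [mul_sub]
    exact hs1.sub hs2
  · simp_rw [mul_sub (1 / ((_ : ℝ) + 1))]
    rw [hs1.tsum_sub hs2]
    clear hs1 hs2
    induction nst, hnn.le using Nat.le_induction with
    | base => simp
    | succ k hk ih =>
      rw [Finset.sum_Ico_succ_top hk, Finset.sum_Ico_succ_top hk]
      have st := erlH0_step ρ η hρ hη m k hm (by omega)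
      rcases hk.eq_or_lt with h | h
      · subst h
        simpa using st
      · have := ih h
        linear_combination this + st
end
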